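/- Let I be an instance of (1-in-3)-SAT with variables X_1,...,X_n and m >= 3 clauses, each clause consisting of three literals on three distinct variables, and let (G_I, C_I) be the multigraph with subset conflict pairs constructed from I as described in the context. Then I admits a truth assignment under which every clause contains exactly one true literal if and only if G_I has an even orientation that violates no subset conflict pair of C_I. -/

import Mathlib

open scoped Classical

noncomputable section

/-- The indegree of vertex `v` under the head-assignment `o`. -/
def indeg {V E : Type*} (o : E → V) (v : V) : ℕ := Nat.card {e // o e = v}

/-- `o` is an orientation of the multigraph with incidence map `ends`:
every edge is directed towards one of its two endpoints (its head). -/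
def IsOrient {V E : Type*} (ends : E → V × V) (o : E → V) : Prop :=
  ∀ e, o e = (ends e).1 ∨ o e = (ends e).2

/-- Edge `e` is incident to vertex `v`. -/
def Inc {V E : Type*} (ends : E → V × V) (e : E) (v : V) : Prop :=
  (ends e).1 = v ∨ (ends e).2 = v

section Construction

variable (n m : ℕ)

/-- The edges of `G_I` other than the possible parity edge `v₀v₀'`: the cycle edges
`z_{i,l}`, the pendant edges `y_{i,l}` and `ȳ_{i,l}`, and the pendant edges `a_jc_j`. -/
def EB1 : Type :=
  (Fin n × Fin m) ⊕ (Fin n × Fin m) ⊕ (Fin n × Fin m) ⊕ Fin m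

/-- The total number of edges so far is odd, so the vertex `v₀'` and the edge `v₀v₀'`
are added. -/
def cond1 : Prop := Odd (Nat.card (EB1 n m))

/-- The edges of `G_I`. -/
def E1T : Type := EB1 n m ⊕ PLift (cond1 n m)

/-- The vertices of `G_I`: the cycle vertices `x_{i,l}`, the clause vertices `c_j`,
the pendant vertices `a_j`, the vertex `v₀`, and possibly `v₀'`. -/
def V1T : Type :=
  (Fin n × Fin m) ⊕ Fin m ⊕ Fin m ⊕ Unit ⊕ PLift (cond1 n m)

/-- The cyclic successor on `Fin m`. -/
def finSucc {m : ℕ} (l : Fin m) : Fin m :=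
  ⟨(l.val + 1) % m, Nat.mod_lt _ (by have := l.isLt; omega)⟩

/-- The cycle edge `z_{i,l}`. -/
def zE (q : Fin n × Fin m) : E1T n m := Sum.inl (Sum.inl q)

/-- The pendant edge `y_{i,l}`. -/
def yE (q : Fin n × Fin m) : E1T n m := Sum.inl (Sum.inr (Sum.inl q))

/-- The pendant edge `ȳ_{i,l}`. -/
def ybE (q : Fin n × Fin m) : E1T n m := Sum.inl (Sum.inr (Sum.inr (Sum.inl q)))

/-- `e` is one of the edges `y_{i,l}` or `ȳ_{i,l}` coming from a variable gadget. -/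
def IsVarEdge (e : E1T n m) : Prop :=
  (∃ q, e = yE n m q) ∨ (∃ q, e = ybE n m q)

variable (clauses : Fin m → Fin 3 → Fin n × Bool)

/-- The incidence map of `G_I`: `z_{i,l}` joins `x_{i,l}` to `x_{i,l+1}`; the free end of
`y_{i,j}` (resp. `ȳ_{i,j}`) is `c_j` if `X_i` occurs positively (resp. negatively) in
clause `j`, and `v₀` otherwise; `a_j` is joined to `c_j`; and possibly `v₀` to `v₀'`. -/
def ends1 : E1T n m → V1T n m × V1T n m
  | Sum.inl (Sum.inl q) => (Sum.inl q, Sum.inl (q.1, finSucc q.2))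
  | Sum.inl (Sum.inr (Sum.inl q)) =>
      (Sum.inl q,
        if ∃ t : Fin 3, clauses q.2 t = (q.1, true) then Sum.inr (Sum.inl q.2)
        else Sum.inr (Sum.inr (Sum.inr (Sum.inl ()))))
  | Sum.inl (Sum.inr (Sum.inr (Sum.inl q))) =>
      (Sum.inl q,
        if ∃ t : Fin 3, clauses q.2 t = (q.1, false) then Sum.inr (Sum.inl q.2)
        else Sum.inr (Sum.inr (Sum.inr (Sum.inl ()))))
  | Sum.inl (Sum.inr (Sum.inr (Sum.inr j))) =>
      (Sum.inr (Sum.inr (Sum.inl j)), Sum.inr (Sum.inl j))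
  | Sum.inr h =>
      (Sum.inr (Sum.inr (Sum.inr (Sum.inl ()))),
        Sum.inr (Sum.inr (Sum.inr (Sum.inr h))))

/-- The family `C_I` of subset conflict pairs: along each variable cycle the pairs
`({z_{i,l}, z_{i,l+1}}, x_{i,l+1})`, `({z_{i,l}, y_{i,l+1}}, x_{i,l+1})` and
`({z_{i,l}, ȳ_{i,l}}, x_{i,l})`, and at each clause vertex `c_j` every pair of the three
variable-gadget edges attached to it. -/
def C1 : Set (Set (E1T n m) × V1T n m) :=
  {c |
    (∃ (i : Fin n) (l : Fin m),
      c = (({zE n m (i, l), zE n m (i, finSucc l)} : Set (E1T n m)),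
            Sum.inl (i, finSucc l)) ∨
      c = (({zE n m (i, l), yE n m (i, finSucc l)} : Set (E1T n m)),
            Sum.inl (i, finSucc l)) ∨
      c = (({zE n m (i, l), ybE n m (i, l)} : Set (E1T n m)), Sum.inl (i, l))) ∨
    (∃ (j : Fin m) (e₁ e₂ : E1T n m), e₁ ≠ e₂ ∧
      IsVarEdge n m e₁ ∧ IsVarEdge n m e₂ ∧
      Inc (ends1 n m clauses) e₁ (Sum.inr (Sum.inl j)) ∧
      Inc (ends1 n m clauses) e₂ (Sum.inr (Sum.inl j)) ∧
      c = (({e₁, e₂} : Set (E1T n m)), Sum.inr (Sum.inl j)))}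

end Construction

section Helpers

theorem finSucc_surjective {m : ℕ} : Function.Surjective (finSucc (m := m)) := by
  intro l
  have hl := l.isLt
  by_cases h : l.val = 0
  · refine ⟨⟨m - 1, by omega⟩, Fin.ext ?_⟩
    simp [finSucc, h, Nat.sub_add_cancel (show 1 ≤ m by omega)]
  · refine ⟨⟨l.val - 1, by omega⟩, Fin.ext ?_⟩
    simp [finSucc, Nat.sub_add_cancel (show 1 ≤ l.val by omega), Nat.mod_eq_of_lt hl]

theorem finSucc_injective {m : ℕ} : Function.Injective (finSucc (m := m)) :=
  Finite.injective_iff_surjective.2 finSucc_surjective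

theorem finSucc_ne {m : ℕ} (hm : 3 ≤ m) (l : Fin m) : finSucc l ≠ l := by
  intro h
  have h' : (l.val + 1) % m = l.val := congrArg Fin.val h
  have hl := l.isLt
  rcases Nat.lt_or_ge (l.val + 1) m with h1 | h1
  · rw [Nat.mod_eq_of_lt h1] at h'
    omega
  · rw [show l.val + 1 = m by omega, Nat.mod_self] at h'
    omega

/-- A property of `Fin m` that is stable under the cyclic successor and holds somewhere
holds everywhere. -/
theorem forall_of_finSucc {m : ℕ} {P : Fin m → Prop} (hP : ∀ l, P l → P (finSucc l))
    {l₀ : Fin m} (h₀ : P l₀) (l : Fin m) : P l := by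
  have hpos : 0 < m := l₀.pos
  have key : ∀ k : ℕ, P ⟨(l₀.val + k) % m, Nat.mod_lt _ hpos⟩ := by
    intro k
    induction k with
    | zero => simpa [Nat.mod_eq_of_lt l₀.isLt] using h₀
    | succ k ih =>
      have := hP _ ih
      simpa [finSucc, Nat.mod_add_mod, add_assoc] using this
  have h := key (l.val + m - l₀.val)
  have e : l₀.val + (l.val + m - l₀.val) = l.val + m := by have := l₀.isLt; omega
  simpa [e, Nat.mod_eq_of_lt l.isLt] using h

theorem indeg_eq_ncard {V E : Type*} (o : E → V) (v : V) :
    indeg o v = Set.ncard {e | o e = v} := rfl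

theorem even_indeg_of_pair {V E : Type*} {o : E → V} {v : V} {e₁ e₂ : E} (hne : e₁ ≠ e₂)
    (h : ∀ e, o e = v ↔ e = e₁ ∨ e = e₂) : Even (indeg o v) := by
  have hs : {e | o e = v} = {e₁, e₂} := Set.ext h
  rw [indeg_eq_ncard, hs, Set.ncard_pair hne]
  exact even_two

theorem even_indeg_of_forall_ne {V E : Type*} {o : E → V} {v : V} (h : ∀ e, o e ≠ v) :
    Even (indeg o v) := by
  have hs : {e | o e = v} = ∅ := Set.eq_empty_of_forall_notMem h
  simp [indeg_eq_ncard, hs]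

theorem exists_ne_of_even_indeg {V E : Type*} {o : E → V} {v : V} (h : Even (indeg o v))
    {e : E} (he : o e = v) : ∃ e', e' ≠ e ∧ o e' = v := by
  by_contra! hc
  have hs : {e | o e = v} = {e} := by
    ext e'
    exact ⟨fun h' => by_contra fun hne => hc e' hne h', fun h' => h' ▸ he⟩
  rw [indeg_eq_ncard, hs, Set.ncard_singleton] at h
  exact absurd h (by decide)

theorem sum_indeg {V E : Type*} [Fintype V] [Finite E] (o : E → V) :
    ∑ v, indeg o v = Nat.card E := by
  rw [← Nat.card_congr (Equiv.sigmaFiberEquiv o), Nat.card_sigma]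
  rfl

/-- If the number of edges is even, the indegrees cannot be odd at exactly one vertex. -/
theorem even_indeg_of_even_card {V E : Type*} [Finite V] [Finite E] {o : E → V} {v₀ : V}
    (hE : Even (Nat.card E)) (h : ∀ v, v ≠ v₀ → Even (indeg o v)) : Even (indeg o v₀) := by
  have := Fintype.ofFinite V
  rw [← sum_indeg o, ← Finset.add_sum_erase _ _ (Finset.mem_univ v₀)] at hE
  refine (Nat.even_add.1 hE).2 (Finset.even_sum _ fun v hv => h v (Finset.ne_of_mem_erase hv))

variable (n m : ℕ)

/-- The pendant edge `a_jc_j`. -/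
def aE (j : Fin m) : E1T n m := Sum.inl (Sum.inr (Sum.inr (Sum.inr j)))

/-- The cycle vertex `x_{i,l}`. -/
def xV (q : Fin n × Fin m) : V1T n m := Sum.inl q

/-- The clause vertex `c_j`. -/
def cV (j : Fin m) : V1T n m := Sum.inr (Sum.inl j)

/-- The pendant vertex `a_j`. -/
def aV (j : Fin m) : V1T n m := Sum.inr (Sum.inr (Sum.inl j))

/-- The vertex `v₀`. -/
def originV : V1T n m := Sum.inr (Sum.inr (Sum.inr (Sum.inl ())))

instance : Finite (EB1 n m) :=
  inferInstanceAs (Finite ((Fin n × Fin m) ⊕ (Fin n × Fin m) ⊕ (Fin n × Fin m) ⊕ Fin m))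

instance : Finite (E1T n m) := inferInstanceAs (Finite (EB1 n m ⊕ PLift (cond1 n m)))

instance : Finite (V1T n m) :=
  inferInstanceAs
    (Finite ((Fin n × Fin m) ⊕ Fin m ⊕ Fin m ⊕ Unit ⊕ PLift (cond1 n m)))

theorem even_card_E1T : Even (Nat.card (E1T n m)) := by
  have h : Nat.card (E1T n m) = Nat.card (EB1 n m) + Nat.card (PLift (cond1 n m)) :=
    Nat.card_sum
  rw [h]
  by_cases hc : cond1 n m
  · have : Unique (PLift (cond1 n m)) := ⟨⟨⟨hc⟩⟩, fun _ => rfl⟩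
    rw [Nat.card_unique (α := PLift (cond1 n m))]
    exact Odd.add_one hc
  · have : IsEmpty (PLift (cond1 n m)) := ⟨fun h => hc h.down⟩
    rw [Nat.card_of_isEmpty (α := PLift (cond1 n m)), add_zero]
    exact Nat.not_odd_iff_even.1 hc

variable {n m}

theorem xV_inj {q q' : Fin n × Fin m} : xV n m q = xV n m q' ↔ q = q' := Sum.inl_injective.eq_iff

theorem cV_inj {j j' : Fin m} : cV n m j = cV n m j' ↔ j = j' :=
  (Sum.inr_injective.comp Sum.inl_injective).eq_iff

theorem zE_inj {q q' : Fin n × Fin m} : zE n m q = zE n m q' ↔ q = q' :=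
  (Sum.inl_injective.comp Sum.inl_injective).eq_iff

theorem yE_inj {q q' : Fin n × Fin m} : yE n m q = yE n m q' ↔ q = q' :=
  (Sum.inl_injective.comp (Sum.inr_injective.comp Sum.inl_injective)).eq_iff

theorem ybE_inj {q q' : Fin n × Fin m} : ybE n m q = ybE n m q' ↔ q = q' :=
  (Sum.inl_injective.comp
    (Sum.inr_injective.comp (Sum.inr_injective.comp Sum.inl_injective))).eq_iff

theorem xV_ne_cV (q : Fin n × Fin m) (j : Fin m) : xV n m q ≠ cV n m j := nofun

theorem originV_ne_cV (j : Fin m) : originV n m ≠ cV n m j := nofun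

theorem originV_ne_xV (q : Fin n × Fin m) : originV n m ≠ xV n m q := nofun

theorem yE_ne_ybE (q q' : Fin n × Fin m) : yE n m q ≠ ybE n m q' := nofun

variable (clauses : Fin m → Fin 3 → Fin n × Bool)

/-- The edge joining the clause vertex `c_j` to the gadget of its `t`-th literal. -/
def litE (j : Fin m) (t : Fin 3) : E1T n m :=
  if (clauses j t).2 = true then yE n m ((clauses j t).1, j) else ybE n m ((clauses j t).1, j)

/-- The free end of `y_{i,l}` (for `b = true`) or of `ȳ_{i,l}` (for `b = false`). -/
def freeEnd (b : Bool) (q : Fin n × Fin m) : V1T n m :=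
  if ∃ t : Fin 3, clauses q.2 t = (q.1, b) then cV n m q.2 else originV n m

theorem freeEnd_eq_cV {b : Bool} {q : Fin n × Fin m} {j : Fin m} :
    freeEnd clauses b q = cV n m j ↔ q.2 = j ∧ ∃ t, clauses j t = (q.1, b) := by
  unfold freeEnd
  split_ifs with h
  · rw [cV_inj]
    exact ⟨fun e => ⟨e, e ▸ h⟩, And.left⟩
  · refine ⟨fun e => absurd e (originV_ne_cV j), ?_⟩
    rintro ⟨rfl, h'⟩
    exact absurd h' h

theorem freeEnd_ne_xV (b : Bool) (q q' : Fin n × Fin m) :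
    freeEnd clauses b q ≠ xV n m q' := by
  unfold freeEnd
  split_ifs
  · exact (xV_ne_cV _ _).symm
  · exact originV_ne_xV _

theorem freeEnd_ne_aV (b : Bool) (q : Fin n × Fin m) (j : Fin m) :
    freeEnd clauses b q ≠ aV n m j := by
  unfold freeEnd
  split_ifs <;> nofun

theorem isVarEdge_litE (j : Fin m) (t : Fin 3) : IsVarEdge n m (litE clauses j t) := by
  unfold litE
  split_ifs
  exacts [Or.inl ⟨_, rfl⟩, Or.inr ⟨_, rfl⟩]

theorem litE_injective (hdistinct : ∀ j, Function.Injective fun t => (clauses j t).1)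
    (j : Fin m) : Function.Injective (litE clauses j) := by
  intro t t' h
  apply hdistinct j
  unfold litE at h
  split_ifs at h
  · exact (Prod.ext_iff.1 (yE_inj.1 h)).1
  · exact absurd h (yE_ne_ybE _ _)
  · exact absurd h.symm (yE_ne_ybE _ _)
  · exact (Prod.ext_iff.1 (ybE_inj.1 h)).1

theorem litE_ne_aE (j : Fin m) (t : Fin 3) : litE clauses j t ≠ aE n m j := by
  unfold litE
  split_ifs <;> nofun

theorem inc_litE (j : Fin m) (t : Fin 3) :
    Inc (ends1 n m clauses) (litE clauses j t) (cV n m j) := by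
  right
  unfold litE
  split_ifs with h
  · exact (freeEnd_eq_cV clauses (b := true)).2 ⟨rfl, t, Prod.ext rfl h⟩
  · exact (freeEnd_eq_cV clauses (b := false)).2
      ⟨rfl, t, Prod.ext rfl (Bool.eq_false_iff.2 h)⟩

theorem litE_of_eq_true {j : Fin m} {t : Fin 3} {i : Fin n} (h : clauses j t = (i, true)) :
    litE clauses j t = yE n m (i, j) := by simp [litE, h]

theorem litE_of_eq_false {j : Fin m} {t : Fin 3} {i : Fin n} (h : clauses j t = (i, false)) :
    litE clauses j t = ybE n m (i, j) := by simp [litE, h]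

/-- The edges at `c_j` are the edge to `a_j` and the three literal edges. -/
theorem eq_of_inc_cV {e : E1T n m} {j : Fin m} (h : Inc (ends1 n m clauses) e (cV n m j)) :
    e = aE n m j ∨ ∃ t, e = litE clauses j t := by
  rcases e with ((q | q | q | k) | p)
  · rcases h with h | h <;> cases h
  · right
    rcases h with h | h
    · cases h
    · obtain ⟨h1, t, ht⟩ := (freeEnd_eq_cV clauses (b := true)).1 h
      subst h1
      exact ⟨t, (litE_of_eq_true clauses ht).symm⟩
  · right
    rcases h with h | h
    · cases h
    · obtain ⟨h1, t, ht⟩ := (freeEnd_eq_cV clauses (b := false)).1 h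
      subst h1
      exact ⟨t, (litE_of_eq_false clauses ht).symm⟩
  · left
    rcases h with h | h
    · cases h
    · cases h
      rfl
  · rcases h with h | h <;> cases h

theorem eq_of_inc_aV {e : E1T n m} {j : Fin m} (h : Inc (ends1 n m clauses) e (aV n m j)) :
    e = aE n m j := by
  rcases e with ((q | q | q | k) | p)
  · rcases h with h | h <;> cases h
  · rcases h with h | h
    · cases h
    · exact absurd h (freeEnd_ne_aV clauses true q j)
  · rcases h with h | h
    · cases h
    · exact absurd h (freeEnd_ne_aV clauses false q j)
  · rcases h with h | h
    · cases h
      rfl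
    · cases h
  · rcases h with h | h <;> cases h

/-- The four edges at `x_{i,l+1}`. -/
theorem eq_of_inc_xV {e : E1T n m} {i : Fin n} {l : Fin m}
    (h : Inc (ends1 n m clauses) e (xV n m (i, finSucc l))) :
    e = zE n m (i, l) ∨ e = zE n m (i, finSucc l) ∨ e = yE n m (i, finSucc l) ∨
      e = ybE n m (i, finSucc l) := by
  rcases e with ((⟨i', l'⟩ | q | q | k) | p)
  · rcases h with h | h
    · have h' := xV_inj.1 h
      exact Or.inr (Or.inl (zE_inj.2 h'))
    · have h' := Prod.ext_iff.1 (xV_inj.1 h)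
      exact Or.inl (zE_inj.2 (Prod.ext h'.1 (finSucc_injective h'.2)))
  · rcases h with h | h
    · exact Or.inr (Or.inr (Or.inl (yE_inj.2 (xV_inj.1 h))))
    · exact absurd h (freeEnd_ne_xV clauses true q _)
  · rcases h with h | h
    · exact Or.inr (Or.inr (Or.inr (ybE_inj.2 (xV_inj.1 h))))
    · exact absurd h (freeEnd_ne_xV clauses false q _)
  · rcases h with h | h <;> cases h
  · rcases h with h | h <;> cases h

theorem IsOrient.inc {V E : Type*} {ends : E → V × V} {o : E → V} (ho : IsOrient ends o)
    {e : E} {v : V} (h : o e = v) : Inc ends e v := by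
  subst h
  exact (ho e).imp Eq.symm Eq.symm

/-- No subset conflict pair of `C_I` is violated, spelled out gadget by gadget. -/
theorem no_conflict_iff (hdistinct : ∀ j, Function.Injective fun t => (clauses j t).1)
    (o : E1T n m → V1T n m) :
    (∀ c ∈ C1 n m clauses, ¬ ∀ e ∈ c.1, o e = c.2) ↔
      (∀ i l, o (zE n m (i, l)) = xV n m (i, finSucc l) →
        o (zE n m (i, finSucc l)) ≠ xV n m (i, finSucc l)) ∧
      (∀ i l, o (zE n m (i, l)) = xV n m (i, finSucc l) →
        o (yE n m (i, finSucc l)) ≠ xV n m (i, finSucc l)) ∧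
      (∀ i l, o (zE n m (i, l)) = xV n m (i, l) → o (ybE n m (i, l)) ≠ xV n m (i, l)) ∧
      (∀ j t t', o (litE clauses j t) = cV n m j → o (litE clauses j t') = cV n m j →
        t = t') := by
  have pair : ∀ (e₁ e₂ : E1T n m) (v : V1T n m), o e₁ = v → o e₂ = v →
      ∀ e ∈ ({e₁, e₂} : Set (E1T n m)), o e = v := by
    rintro e₁ e₂ v h₁ h₂ e (rfl | rfl)
    exacts [h₁, h₂]
  constructor
  · intro H
    refine ⟨fun i l h h' => ?_, fun i l h h' => ?_, fun i l h h' => ?_,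
      fun j t t' h h' => ?_⟩
    · exact H _ (Or.inl ⟨i, l, Or.inl rfl⟩) (pair _ _ _ h h')
    · exact H _ (Or.inl ⟨i, l, Or.inr (Or.inl rfl)⟩) (pair _ _ _ h h')
    · exact H _ (Or.inl ⟨i, l, Or.inr (Or.inr rfl)⟩) (pair _ _ _ h h')
    · by_contra hne
      exact H _ (Or.inr ⟨j, _, _, (litE_injective clauses hdistinct j).ne hne,
        isVarEdge_litE clauses j t, isVarEdge_litE clauses j t', inc_litE clauses j t,
        inc_litE clauses j t', rfl⟩) (pair _ _ _ h h')
  · rintro ⟨hz, hy, hyb, hc⟩ c (⟨i, l, rfl | rfl | rfl⟩ | ⟨j, e₁, e₂, hne, v₁, v₂, i₁, i₂, rfl⟩) H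
    · exact hz i l (H _ (Or.inl rfl)) (H _ (Or.inr rfl))
    · exact hy i l (H _ (Or.inl rfl)) (H _ (Or.inr rfl))
    · exact hyb i l (H _ (Or.inl rfl)) (H _ (Or.inr rfl))
    · have lit : ∀ e, IsVarEdge n m e → Inc (ends1 n m clauses) e (cV n m j) →
          ∃ t, e = litE clauses j t := by
        intro e hv hi
        refine (eq_of_inc_cV clauses hi).resolve_left ?_
        rintro rfl
        rcases hv with ⟨q, h⟩ | ⟨q, h⟩ <;> cases h
      obtain ⟨t₁, rfl⟩ := lit e₁ v₁ i₁
      obtain ⟨t₂, rfl⟩ := lit e₂ v₂ i₂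
      exact hne (congrArg _ (hc j t₁ t₂ (H _ (Or.inl rfl)) (H _ (Or.inr rfl))))

/-- Every variable gadget is oriented as prescribed by the assignment `A`. -/
structure Follows (A : Fin n → Bool) (o : E1T n m → V1T n m) : Prop where
  z_true : ∀ i l, A i = true → o (zE n m (i, l)) = xV n m (i, finSucc l)
  z_false : ∀ i l, A i = false → o (zE n m (i, l)) = xV n m (i, l)
  y_true : ∀ i l, A i = true → o (yE n m (i, l)) = freeEnd clauses true (i, l)
  y_false : ∀ i l, A i = false → o (yE n m (i, l)) = xV n m (i, l)
  yb_true : ∀ i l, A i = true → o (ybE n m (i, l)) = xV n m (i, l)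
  yb_false : ∀ i l, A i = false → o (ybE n m (i, l)) = freeEnd clauses false (i, l)

variable {clauses}

/-- A literal edge points to its clause exactly when the literal is true. -/
theorem Follows.litE_eq_cV {A : Fin n → Bool} {o : E1T n m → V1T n m}
    (h : Follows clauses A o) (j : Fin m) (t : Fin 3) :
    o (litE clauses j t) = cV n m j ↔ A (clauses j t).1 = (clauses j t).2 := by
  rcases hc : clauses j t with ⟨i, b⟩
  cases b
  · rw [litE_of_eq_false clauses hc]
    cases hA : A i
    · simpa [h.yb_false i j hA, freeEnd_eq_cV] using ⟨t, hc⟩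
    · simp [h.yb_true i j hA, xV_ne_cV]
  · rw [litE_of_eq_true clauses hc]
    cases hA : A i
    · simp [h.y_false i j hA, xV_ne_cV]
    · simpa [h.y_true i j hA, freeEnd_eq_cV] using ⟨t, hc⟩

variable (clauses) in
/-- The orientation of `G_I` induced by the assignment `A`. -/
def assignmentOrient (A : Fin n → Bool) : E1T n m → V1T n m
  | Sum.inl (Sum.inl q) => if A q.1 = true then xV n m (q.1, finSucc q.2) else xV n m q
  | Sum.inl (Sum.inr (Sum.inl q)) =>
      if A q.1 = true then freeEnd clauses true q else xV n m q
  | Sum.inl (Sum.inr (Sum.inr (Sum.inl q))) =>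
      if A q.1 = true then xV n m q else freeEnd clauses false q
  | Sum.inl (Sum.inr (Sum.inr (Sum.inr j))) => cV n m j
  | Sum.inr _ => originV n m

theorem isOrient_assignmentOrient (A : Fin n → Bool) :
    IsOrient (ends1 n m clauses) (assignmentOrient clauses A) := by
  rintro ((q | q | q | k) | p)
  · by_cases h : A q.1 = true
    · exact Or.inr (if_pos h)
    · exact Or.inl (if_neg h)
  · by_cases h : A q.1 = true
    · exact Or.inr (if_pos h)
    · exact Or.inl (if_neg h)
  · by_cases h : A q.1 = true
    · exact Or.inl (if_pos h)
    · exact Or.inr (if_neg h)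
  · exact Or.inr rfl
  · exact Or.inl rfl

theorem follows_assignmentOrient (A : Fin n → Bool) :
    Follows clauses A (assignmentOrient clauses A) where
  z_true _ _ h := if_pos h
  z_false _ _ h := if_neg (Bool.eq_false_iff.1 h)
  y_true _ _ h := if_pos h
  y_false _ _ h := if_neg (Bool.eq_false_iff.1 h)
  yb_true _ _ h := if_pos h
  yb_false _ _ h := if_neg (Bool.eq_false_iff.1 h)

/-- In an orientation following an assignment, the cycle vertices have indegree two. -/
theorem Follows.even_indeg_xV (hm : 3 ≤ m) {A : Fin n → Bool} {o : E1T n m → V1T n m}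
    (h : Follows clauses A o) (ho : IsOrient (ends1 n m clauses) o) (i : Fin n) (l : Fin m) :
    Even (indeg o (xV n m (i, finSucc l))) := by
  cases hA : A i
  · refine even_indeg_of_pair (e₁ := zE n m (i, finSucc l)) (e₂ := yE n m (i, finSucc l))
      nofun fun e => ⟨fun he => ?_, ?_⟩
    · rcases eq_of_inc_xV clauses (ho.inc he) with rfl | rfl | rfl | rfl
      · rw [h.z_false i l hA, xV_inj] at he
        exact absurd (congrArg Prod.snd he).symm (finSucc_ne hm l)
      · exact Or.inl rfl
      · exact Or.inr rfl
      · rw [h.yb_false i _ hA] at he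
        exact absurd he (freeEnd_ne_xV clauses _ _ _)
    · rintro (rfl | rfl)
      exacts [h.z_false i _ hA, h.y_false i _ hA]
  · refine even_indeg_of_pair (e₁ := zE n m (i, l)) (e₂ := ybE n m (i, finSucc l))
      nofun fun e => ⟨fun he => ?_, ?_⟩
    · rcases eq_of_inc_xV clauses (ho.inc he) with rfl | rfl | rfl | rfl
      · exact Or.inl rfl
      · rw [h.z_true i _ hA, xV_inj] at he
        exact absurd (congrArg Prod.snd he) (finSucc_ne hm _)
      · rw [h.y_true i _ hA] at he
        exact absurd he (freeEnd_ne_xV clauses _ _ _)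
      · exact Or.inr rfl
    · rintro (rfl | rfl)
      exacts [h.z_true i _ hA, h.yb_true i _ hA]

theorem exists_orient_of_assignment (hm : 3 ≤ m)
    (hdistinct : ∀ j, Function.Injective fun t => (clauses j t).1) {A : Fin n → Bool}
    (hA : ∀ j : Fin m, ∃! t : Fin 3, A (clauses j t).1 = (clauses j t).2) :
    ∃ o : E1T n m → V1T n m, IsOrient (ends1 n m clauses) o ∧ (∀ x, Even (indeg o x)) ∧
      ∀ c ∈ C1 n m clauses, ¬ ∀ e ∈ c.1, o e = c.2 := by
  have hf := follows_assignmentOrient (clauses := clauses) A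
  have ho := isOrient_assignmentOrient (clauses := clauses) A
  have haE : ∀ j, assignmentOrient clauses A (aE n m j) = cV n m j := fun _ => rfl
  have hsE : ∀ p, assignmentOrient clauses A (Sum.inr p) = originV n m := fun _ => rfl
  generalize assignmentOrient clauses A = o at *
  refine ⟨o, ho, ?_, ?_⟩
  · have rest : ∀ v, v ≠ originV n m → Even (indeg o v) := by
      rintro (⟨i, l⟩ | j | j | u | p) hv
      · obtain ⟨l, rfl⟩ := finSucc_surjective l
        exact hf.even_indeg_xV hm ho i l
      · obtain ⟨t, ht, huniq⟩ := hA j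
        refine even_indeg_of_pair (litE_ne_aE clauses j t) fun e => ⟨fun he => ?_, ?_⟩
        · rcases eq_of_inc_cV clauses (ho.inc he) with rfl | ⟨t', rfl⟩
          · exact Or.inr rfl
          · exact Or.inl (congrArg _ (huniq t' ((hf.litE_eq_cV j t').1 he)))
        · rintro (rfl | rfl)
          exacts [(hf.litE_eq_cV j t).2 ht, haE j]
      · refine even_indeg_of_forall_ne fun e he => ?_
        obtain rfl := eq_of_inc_aV clauses (ho.inc he)
        cases (haE j).symm.trans he
      · exact absurd rfl hv
      · refine even_indeg_of_forall_ne fun e he => ?_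
        rcases e with ((q | q | q | k) | p')
        · rcases ho.inc he with h | h <;> cases h
        · rcases ho.inc he with h | h
          · cases h
          · change freeEnd clauses true q = _ at h
            unfold freeEnd at h
            split_ifs at h <;> cases h
        · rcases ho.inc he with h | h
          · cases h
          · change freeEnd clauses false q = _ at h
            unfold freeEnd at h
            split_ifs at h <;> cases h
        · rcases ho.inc he with h | h <;> cases h
        · cases (hsE p').symm.trans he
    intro v
    by_cases hv : v = originV n m
    · subst hv
      exact even_indeg_of_even_card (even_card_E1T n m) rest
    · exact rest v hv
  · rw [no_conflict_iff clauses hdistinct]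
    refine ⟨fun i l h h' => ?_, fun i l h h' => ?_, fun i l h h' => ?_, fun j t t' h h' => ?_⟩
    · cases hAi : A i
      · rw [hf.z_false i l hAi, xV_inj] at h
        exact finSucc_ne hm l (congrArg Prod.snd h).symm
      · rw [hf.z_true i _ hAi, xV_inj] at h'
        exact finSucc_ne hm _ (congrArg Prod.snd h')
    · cases hAi : A i
      · rw [hf.z_false i l hAi, xV_inj] at h
        exact finSucc_ne hm l (congrArg Prod.snd h).symm
      · rw [hf.y_true i _ hAi] at h'
        exact freeEnd_ne_xV clauses _ _ _ h'
    · cases hAi : A i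
      · rw [hf.yb_false i _ hAi] at h'
        exact freeEnd_ne_xV clauses _ _ _ h'
      · rw [hf.z_true i _ hAi, xV_inj] at h
        exact finSucc_ne hm l (congrArg Prod.snd h)
    · have hunique := (hA j).unique ((hf.litE_eq_cV j t).1 h) ((hf.litE_eq_cV j t').1 h')
      exact hunique

/-- An even conflict-free orientation orients every variable gadget according to some
assignment. -/
theorem exists_follows (hm : 3 ≤ m) {o : E1T n m → V1T n m}
    (ho : IsOrient (ends1 n m clauses) o) (heven : ∀ x, Even (indeg o x))
    (hz : ∀ i l, o (zE n m (i, l)) = xV n m (i, finSucc l) →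
      o (zE n m (i, finSucc l)) ≠ xV n m (i, finSucc l))
    (hy : ∀ i l, o (zE n m (i, l)) = xV n m (i, finSucc l) →
      o (yE n m (i, finSucc l)) ≠ xV n m (i, finSucc l))
    (hyb : ∀ i l, o (zE n m (i, l)) = xV n m (i, l) → o (ybE n m (i, l)) ≠ xV n m (i, l)) :
    ∃ A : Fin n → Bool, Follows clauses A o := by
  have oz : ∀ i l, o (zE n m (i, l)) = xV n m (i, l) ∨
      o (zE n m (i, l)) = xV n m (i, finSucc l) := fun i l => ho (zE n m (i, l))
  have oy : ∀ q, o (yE n m q) = xV n m q ∨ o (yE n m q) = freeEnd clauses true q :=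
    fun q => ho (yE n m q)
  have oyb : ∀ q, o (ybE n m q) = xV n m q ∨ o (ybE n m q) = freeEnd clauses false q :=
    fun q => ho (ybE n m q)
  have step : ∀ i l, o (zE n m (i, l)) = xV n m (i, finSucc l) →
      o (zE n m (i, finSucc l)) = xV n m (i, finSucc (finSucc l)) :=
    fun i l h => (oz i _).resolve_left (hz i l h)
  let A : Fin n → Bool := fun i => decide (∀ l, o (zE n m (i, l)) = xV n m (i, finSucc l))
  have z_true : ∀ i l, A i = true → o (zE n m (i, l)) = xV n m (i, finSucc l) :=
    fun i l h => of_decide_eq_true h l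
  have z_false : ∀ i l, A i = false → o (zE n m (i, l)) = xV n m (i, l) := by
    intro i l h
    refine (oz i l).resolve_right fun h' => of_decide_eq_false h ?_
    exact forall_of_finSucc (P := fun l => o (zE n m (i, l)) = xV n m (i, finSucc l))
      (step i) h'
  have y_ne : ∀ i l, A i = true → o (yE n m (i, l)) ≠ xV n m (i, l) := by
    intro i l h
    obtain ⟨l, rfl⟩ := finSucc_surjective l
    exact hy i l (z_true i l h)
  have yb_ne : ∀ i l, A i = false → o (ybE n m (i, l)) ≠ xV n m (i, l) :=
    fun i l h => hyb i l (z_false i l h)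
  refine ⟨A, z_true, z_false, fun i l h => (oy _).resolve_left (y_ne i l h), fun i l h => ?_,
    fun i l h => ?_, fun i l h => (oyb _).resolve_left (yb_ne i l h)⟩
  · obtain ⟨l, rfl⟩ := finSucc_surjective l
    obtain ⟨e, hne, he⟩ := exists_ne_of_even_indeg (heven _) (z_false i (finSucc l) h)
    rcases eq_of_inc_xV clauses (ho.inc he) with rfl | rfl | rfl | rfl
    · rw [z_false i l h, xV_inj] at he
      exact absurd (congrArg Prod.snd he).symm (finSucc_ne hm l)
    · exact absurd rfl hne
    · exact he
    · exact absurd he (yb_ne i _ h)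
  · obtain ⟨l, rfl⟩ := finSucc_surjective l
    obtain ⟨e, hne, he⟩ := exists_ne_of_even_indeg (heven _) (z_true i l h)
    rcases eq_of_inc_xV clauses (ho.inc he) with rfl | rfl | rfl | rfl
    · exact absurd rfl hne
    · exact absurd he (hz i l (z_true i l h))
    · exact absurd he (y_ne i _ h)
    · exact he

theorem exists_assignment_of_orient (hm : 3 ≤ m)
    (hdistinct : ∀ j, Function.Injective fun t => (clauses j t).1) {o : E1T n m → V1T n m}
    (ho : IsOrient (ends1 n m clauses) o) (heven : ∀ x, Even (indeg o x))
    (hc : ∀ c ∈ C1 n m clauses, ¬ ∀ e ∈ c.1, o e = c.2) :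
    ∃ A : Fin n → Bool, ∀ j : Fin m, ∃! t : Fin 3, A (clauses j t).1 = (clauses j t).2 := by
  obtain ⟨hz, hy, hyb, hlit⟩ := (no_conflict_iff clauses hdistinct o).1 hc
  obtain ⟨A, hA⟩ := exists_follows hm ho heven hz hy hyb
  refine ⟨A, fun j => ?_⟩
  have ha : o (aE n m j) = cV n m j := by
    refine (ho (aE n m j)).resolve_left fun h => ?_
    obtain ⟨e, hne, he⟩ := exists_ne_of_even_indeg (heven (aV n m j)) h
    exact hne (eq_of_inc_aV clauses (ho.inc he))
  obtain ⟨e, hne, he⟩ := exists_ne_of_even_indeg (heven _) ha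
  obtain ⟨t, rfl⟩ := (eq_of_inc_cV clauses (ho.inc he)).resolve_left hne
  exact ⟨t, (hA.litE_eq_cV j t).1 he,
    fun t' ht' => hlit j t' t ((hA.litE_eq_cV j t').2 ht') he⟩

end Helpers

/-- a (1-in-3)-SAT instance with `m ≥ 3` clauses (three literals on three
distinct variables per clause) is satisfiable with exactly one true literal per clause iff
the constructed multigraph `G_I` has an even orientation violating no subset conflict pair
of `C_I` (a subset conflict `({e₁,e₂},v)` is violated when both `e₁` and `e₂` have head `v`). -/
theorem stmt_1 (n m : ℕ) (hm : 3 ≤ m) (clauses : Fin m → Fin 3 → Fin n × Bool)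
    (hdistinct : ∀ j, Function.Injective fun t => (clauses j t).1) :
    (∃ A : Fin n → Bool, ∀ j : Fin m, ∃! t : Fin 3, A (clauses j t).1 = (clauses j t).2) ↔
    (∃ o : E1T n m → V1T n m, IsOrient (ends1 n m clauses) o ∧
        (∀ x, Even (indeg o x)) ∧
        ∀ c ∈ C1 n m clauses, ¬ ∀ e ∈ c.1, o e = c.2) := by
  constructor
  · rintro ⟨A, hA⟩
    exact exists_orient_of_assignment hm hdistinct hA
  · rintro ⟨o, ho, heven, hc⟩
    exact exists_assignment_of_orient hm hdistinct ho heven hc
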